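/- Define the time-T value function J_T^1(π¹, u²) := min_{u¹ ∈ 𝒰_T^1} c̃_T^1(π¹, u¹, u²), where c̃_T^1(π¹, u¹, u²) = Σ_x c_T(x, u¹, u²)·π¹(x). Then: (1) for every admissible team strategy g of the structural form U_t^1 = g_t^1(Π_t^1, Π_t^2), U_t^2 = g_t^2(Π_t^2) (with extended memory at T), the terminal cost satisfies 𝒥_T(g) := E^{(g,ψ^2)}[c_T(X_T, U_T^1, U_T^2)] ≥ E^{(g,ψ^2)}[J_T^1(Π_T^1, U_T^2)]; and (2) the control law g_T^{*1}(π¹, u²) ∈ argmin_{u¹} c̃_T^1(π¹, u¹, u²) achieves equality: replacing g_T^1 by g_T^{*1} gives 𝒥_T(g_{0:T−1}, g_T^{*1}, g_T^2) = E^{(g,ψ^2)}[J_T^1(Π_T^1, U_T^2)]. -/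

import Mathlib

/-!
Common framework: a two-agent sequential dynamic team with nested information
structure (Dave & Malikopoulos, "Structural results for decentralized
stochastic control with a nested information structure").

* `X t` : state space at time `t`; `U1 t`, `U2 t` : action spaces of agents 1 and 2;
* `W t` : disturbance; `V1 t`, `V2 t` : measurement noises; `Y1 t`, `Y2 t` : observations.
* Dynamics `X_{t+1} = f t X_t U¹_t U²_t W_t`, observations `Y^k_t = h^k t X_t V^k_t`.
* Memories `M²_t = (Y²_{0:t}, U²_{0:t-1})`, `L_t^{[1,2]} = (Y¹_{0:t}, U¹_{0:t-1})`,
  `M¹_t = (L_t^{[1,2]}, M²_t)` (nested information).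
* The primitive random variables are independent with given PMFs; the sample
  space for horizon `T` is `ΩT`, with the product mass function `mass`.
-/

open scoped Classical
open Finset

namespace NestedTeam

noncomputable section

/-- Memory of agent 2 at time `t`: observations `Y²₀,…,Y²ₜ` and actions `U²₀,…,U²ₜ₋₁`. -/
abbrev M2 (Y2 U2 : ℕ → Type) (t : ℕ) : Type :=
  ((s : Fin (t + 1)) → Y2 s) × ((s : Fin t) → U2 s)

/-- The private information `L_t^{[1,2]} = M¹_t \ M²_t` of agent 1. -/
abbrev Lp (Y1 U1 : ℕ → Type) (t : ℕ) : Type :=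
  ((s : Fin (t + 1)) → Y1 s) × ((s : Fin t) → U1 s)

/-- Memory of agent 1 at time `t` (nested information: it contains `M²_t`). -/
abbrev M1 (Y1 Y2 U1 U2 : ℕ → Type) (t : ℕ) : Type :=
  Lp Y1 U1 t × M2 Y2 U2 t

/-- The system: dynamics, observation maps and per-stage cost. -/
structure Sys (X U1 U2 W V1 V2 Y1 Y2 : ℕ → Type) where
  f : ∀ t, X t → U1 t → U2 t → W t → X (t + 1)
  h1 : ∀ t, X t → V1 t → Y1 t
  h2 : ∀ t, X t → V2 t → Y2 t
  c : ∀ t, X t → U1 t → U2 t → ℝ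

/-- A control strategy profile: `U¹_t = g1 t M¹_t`, `U²_t = g2 t M²_t`. -/
structure Strat (U1 U2 Y1 Y2 : ℕ → Type) where
  g1 : ∀ t, M1 Y1 Y2 U1 U2 t → U1 t
  g2 : ∀ t, M2 Y2 U2 t → U2 t

/-- A realization of the primitive random variables. -/
structure Prim (X W V1 V2 : ℕ → Type) where
  x0 : X 0
  w : ∀ t, W t
  v1 : ∀ t, V1 t
  v2 : ∀ t, V2 t

variable {X U1 U2 W V1 V2 Y1 Y2 : ℕ → Type}

/-- The closed-loop trajectory: states `X_{0:t}` and actions `U^{1:2}_{0:t-1}`. -/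
def hist (S : Sys X U1 U2 W V1 V2 Y1 Y2) (g : Strat U1 U2 Y1 Y2) (ρ : Prim X W V1 V2) :
    (t : ℕ) → ((s : Fin (t + 1)) → X s) × ((s : Fin t) → U1 s × U2 s)
  | 0 => (Fin.cons (α := fun s : Fin 1 => X s) ρ.x0 (fun i => i.elim0), fun i => i.elim0)
  | t + 1 =>
    let p := hist S g ρ t
    let y1 : (s : Fin (t + 1)) → Y1 s := fun s => S.h1 s (p.1 s) (ρ.v1 s)
    let y2 : (s : Fin (t + 1)) → Y2 s := fun s => S.h2 s (p.1 s) (ρ.v2 s)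
    let m1 : M1 Y1 Y2 U1 U2 t := ((y1, fun s => (p.2 s).1), (y2, fun s => (p.2 s).2))
    let a1 := g.g1 t m1
    let a2 := g.g2 t m1.2
    (Fin.snoc (α := fun s : Fin (t + 2) => X s) p.1 (S.f t (p.1 (Fin.last t)) a1 a2 (ρ.w t)),
     Fin.snoc (α := fun s : Fin (t + 1) => U1 s × U2 s) p.2 (a1, a2))

/-- State `X_t` along the closed loop. -/
def xTraj (S : Sys X U1 U2 W V1 V2 Y1 Y2) (g : Strat U1 U2 Y1 Y2) (ρ : Prim X W V1 V2)
    (t : ℕ) : X t := (hist S g ρ t).1 (Fin.last t)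

/-- `L_t^{[1,2]} = (Y¹_{0:t}, U¹_{0:t-1})` along the closed loop. -/
def lpTraj (S : Sys X U1 U2 W V1 V2 Y1 Y2) (g : Strat U1 U2 Y1 Y2) (ρ : Prim X W V1 V2)
    (t : ℕ) : Lp Y1 U1 t :=
  (fun s => S.h1 s ((hist S g ρ t).1 s) (ρ.v1 s), fun s => ((hist S g ρ t).2 s).1)

/-- `M²_t = (Y²_{0:t}, U²_{0:t-1})` along the closed loop. -/
def m2Traj (S : Sys X U1 U2 W V1 V2 Y1 Y2) (g : Strat U1 U2 Y1 Y2) (ρ : Prim X W V1 V2)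
    (t : ℕ) : M2 Y2 U2 t :=
  (fun s => S.h2 s ((hist S g ρ t).1 s) (ρ.v2 s), fun s => ((hist S g ρ t).2 s).2)

/-- `M¹_t` along the closed loop. -/
def m1Traj (S : Sys X U1 U2 W V1 V2 Y1 Y2) (g : Strat U1 U2 Y1 Y2) (ρ : Prim X W V1 V2)
    (t : ℕ) : M1 Y1 Y2 U1 U2 t := (lpTraj S g ρ t, m2Traj S g ρ t)

/-- Action `U¹_t` along the closed loop. -/
def u1Traj (S : Sys X U1 U2 W V1 V2 Y1 Y2) (g : Strat U1 U2 Y1 Y2) (ρ : Prim X W V1 V2)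
    (t : ℕ) : U1 t := g.g1 t (m1Traj S g ρ t)

/-- Action `U²_t` along the closed loop. -/
def u2Traj (S : Sys X U1 U2 W V1 V2 Y1 Y2) (g : Strat U1 U2 Y1 Y2) (ρ : Prim X W V1 V2)
    (t : ℕ) : U2 t := g.g2 t (m2Traj S g ρ t)

/-- Observation `Y¹_t` along the closed loop. -/
def y1Traj (S : Sys X U1 U2 W V1 V2 Y1 Y2) (g : Strat U1 U2 Y1 Y2) (ρ : Prim X W V1 V2)
    (t : ℕ) : Y1 t := S.h1 t (xTraj S g ρ t) (ρ.v1 t)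

/-- Observation `Y²_t` along the closed loop. -/
def y2Traj (S : Sys X U1 U2 W V1 V2 Y1 Y2) (g : Strat U1 U2 Y1 Y2) (ρ : Prim X W V1 V2)
    (t : ℕ) : Y2 t := S.h2 t (xTraj S g ρ t) (ρ.v2 t)

/-- New information `Z¹_{t+1} = (Y¹_{t+1}, U¹_t, Y²_{t+1}, U²_t)` of agent 1. -/
def z1Traj (S : Sys X U1 U2 W V1 V2 Y1 Y2) (g : Strat U1 U2 Y1 Y2) (ρ : Prim X W V1 V2)
    (t : ℕ) : Y1 (t + 1) × U1 t × Y2 (t + 1) × U2 t :=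
  (y1Traj S g ρ (t + 1), u1Traj S g ρ t, y2Traj S g ρ (t + 1), u2Traj S g ρ t)

/-- New information `Z²_{t+1} = (Y²_{t+1}, U²_t)` of agent 2. -/
def z2Traj (S : Sys X U1 U2 W V1 V2 Y1 Y2) (g : Strat U1 U2 Y1 Y2) (ρ : Prim X W V1 V2)
    (t : ℕ) : Y2 (t + 1) × U2 t := (y2Traj S g ρ (t + 1), u2Traj S g ρ t)

/-- Sample space of primitive random variables for horizon `T`. -/
abbrev ΩT (X W V1 V2 : ℕ → Type) (T : ℕ) : Type :=
  X 0 × ((t : Fin (T + 1)) → W t) × ((t : Fin (T + 1)) → V1 t) × ((t : Fin (T + 1)) → V2 t)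

/-- Extend a finite-horizon family to all times (by junk beyond the horizon). -/
def ext {α : ℕ → Type} [∀ t, Inhabited (α t)] (T : ℕ) (a : (t : Fin (T + 1)) → α t)
    (t : ℕ) : α t := if h : t < T + 1 then a ⟨t, h⟩ else default

/-- The primitive realization corresponding to a sample point. -/
def toPrim [∀ t, Inhabited (W t)] [∀ t, Inhabited (V1 t)] [∀ t, Inhabited (V2 t)]
    (T : ℕ) (ω : ΩT X W V1 V2 T) : Prim X W V1 V2 :=
  ⟨ω.1, ext T ω.2.1, ext T ω.2.2.1, ext T ω.2.2.2⟩

/-- The (known) probability mass functions of the mutually independent primitive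
random variables. -/
structure PrimPMF (X W V1 V2 : ℕ → Type) [Fintype (X 0)] [∀ t, Fintype (W t)]
    [∀ t, Fintype (V1 t)] [∀ t, Fintype (V2 t)] where
  pX0 : X 0 → ℝ
  pW : ∀ t, W t → ℝ
  pV1 : ∀ t, V1 t → ℝ
  pV2 : ∀ t, V2 t → ℝ
  pX0_nonneg : ∀ x, 0 ≤ pX0 x
  pX0_sum : ∑ x, pX0 x = 1
  pW_nonneg : ∀ t w, 0 ≤ pW t w
  pW_sum : ∀ t, ∑ w, pW t w = 1
  pV1_nonneg : ∀ t v, 0 ≤ pV1 t v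
  pV1_sum : ∀ t, ∑ v, pV1 t v = 1
  pV2_nonneg : ∀ t v, 0 ≤ pV2 t v
  pV2_sum : ∀ t, ∑ v, pV2 t v = 1

variable [Fintype (X 0)] [∀ t, Fintype (W t)] [∀ t, Fintype (V1 t)] [∀ t, Fintype (V2 t)]
variable [∀ t, Inhabited (W t)] [∀ t, Inhabited (V1 t)] [∀ t, Inhabited (V2 t)]

/-- Product mass of a sample point (independent primitives). -/
def mass (P : PrimPMF X W V1 V2) (T : ℕ) (ω : ΩT X W V1 V2 T) : ℝ :=
  P.pX0 ω.1 * (∏ t : Fin (T + 1), P.pW t (ω.2.1 t)) *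
    (∏ t : Fin (T + 1), P.pV1 t (ω.2.2.1 t)) * (∏ t : Fin (T + 1), P.pV2 t (ω.2.2.2 t))

/-- Elementary conditional probability `P(A | B)` on a finite sample space. -/
def condProb {Ω : Type*} [Fintype Ω] (P : Ω → ℝ) (A B : Ω → Prop) : ℝ :=
  (∑ ω, if A ω ∧ B ω then P ω else 0) / (∑ ω, if B ω then P ω else 0)

/-- Elementary conditional expectation `E[F | B]` on a finite sample space. -/
def condExp {Ω : Type*} [Fintype Ω] (P : Ω → ℝ) (F : Ω → ℝ) (B : Ω → Prop) : ℝ :=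
  (∑ ω, if B ω then P ω * F ω else 0) / (∑ ω, if B ω then P ω else 0)

/-- Agent 1's information state `Π¹_t = P(X_t = · | M¹_t)` at the realization `ω`. -/
def infoState1 (S : Sys X U1 U2 W V1 V2 Y1 Y2) (g : Strat U1 U2 Y1 Y2)
    (P : PrimPMF X W V1 V2) (T : ℕ) (ω : ΩT X W V1 V2 T) (t : ℕ) : X t → ℝ :=
  fun x => condProb (mass P T)
    (fun ω' => xTraj S g (toPrim T ω') t = x)
    (fun ω' => m1Traj S g (toPrim T ω') t = m1Traj S g (toPrim T ω) t)

/-- Agent 2's information state `Π²_t = P((X_t, L_t^{[1,2]}) = · | M²_t)` at `ω`. -/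
def infoState2 (S : Sys X U1 U2 W V1 V2 Y1 Y2) (g : Strat U1 U2 Y1 Y2)
    (P : PrimPMF X W V1 V2) (T : ℕ) (ω : ΩT X W V1 V2 T) (t : ℕ) :
    X t × Lp Y1 U1 t → ℝ :=
  fun sl => condProb (mass P T)
    (fun ω' => (xTraj S g (toPrim T ω') t, lpTraj S g (toPrim T ω') t) = sl)
    (fun ω' => m2Traj S g (toPrim T ω') t = m2Traj S g (toPrim T ω) t)

/-- Per-stage cost along the closed loop. -/
def stageCost (S : Sys X U1 U2 W V1 V2 Y1 Y2) (g : Strat U1 U2 Y1 Y2) (ρ : Prim X W V1 V2)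
    (t : ℕ) : ℝ := S.c t (xTraj S g ρ t) (u1Traj S g ρ t) (u2Traj S g ρ t)

/-- Expected cost-to-go `𝒥_{t₀}(g) = E[Σ_{t=t₀}^T c_t(X_t,U¹_t,U²_t)]`. -/
def costToGo (S : Sys X U1 U2 W V1 V2 Y1 Y2) (g : Strat U1 U2 Y1 Y2)
    (P : PrimPMF X W V1 V2) (T t0 : ℕ) : ℝ :=
  ∑ ω : ΩT X W V1 V2 T, mass P T ω * ∑ t ∈ Finset.Icc t0 T, stageCost S g (toPrim T ω) t

/-- Expected total cost `𝒥(g) = E[Σ_{t=0}^T c_t(X_t,U¹_t,U²_t)]`. -/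
def totalCost (S : Sys X U1 U2 W V1 V2 Y1 Y2) (g : Strat U1 U2 Y1 Y2)
    (P : PrimPMF X W V1 V2) (T : ℕ) : ℝ := costToGo S g P T 0

/-- `(g, ψ²)` is a compatible control/prescription pair: agent 1's action is
generated by the prescription `Γ_t^{[2,1]} = ψ_t(M²_t)` applied to `Π¹_t`. -/
def Compat (S : Sys X U1 U2 W V1 V2 Y1 Y2) (g : Strat U1 U2 Y1 Y2)
    (ψ : ∀ t, M2 Y2 U2 t → (X t → ℝ) → U1 t) (P : PrimPMF X W V1 V2) (T : ℕ) : Prop :=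
  ∀ t, t ≤ T → ∀ ω : ΩT X W V1 V2 T, 0 < mass P T ω →
    u1Traj S g (toPrim T ω) t =
      ψ t (m2Traj S g (toPrim T ω) t) (infoState1 S g P T ω t)

/-- The map `e_t` of Lemma 4: conditioning a joint distribution on
`𝒳_t × 𝓛_t^{[1,2]}` on its second component. -/
def eMap [∀ t, Fintype (X t)] (t : ℕ) (π2 : X t × Lp Y1 U1 t → ℝ) (l : Lp Y1 U1 t) :
    X t → ℝ := fun x => π2 (x, l) / ∑ x', π2 (x', l)

theorem smoothing_aux {Ω A B : Type*} [Fintype Ω] [Fintype A] (p : Ω → ℝ) (hp : ∀ ω, 0 ≤ p ω)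
    (Z : Ω → A) (M : Ω → B) (F : A → Ω → ℝ)
    (hF : ∀ x ω ω', M ω = M ω' → F x ω = F x ω') :
    ∑ ω, p ω * F (Z ω) ω =
      ∑ ω, p ω * ∑ x, F x ω * condProb p (fun ω' => Z ω' = x) (fun ω' => M ω' = M ω) := by
  have h1 : ∀ ω, p ω * ∑ x, F x ω * condProb p (fun ω' => Z ω' = x) (fun ω' => M ω' = M ω)
      = ∑ ω', if M ω' = M ω then
          p ω * (p ω' * F (Z ω') ω' / (∑ ω'', if M ω'' = M ω' then p ω'' else 0)) else 0 := by
    intro ω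
    unfold condProb
    simp_rw [Finset.mul_sum, Finset.sum_div, Finset.mul_sum]
    rw [Finset.sum_comm]
    refine Finset.sum_congr rfl fun ω' _ => ?_
    by_cases h : M ω' = M ω
    · rw [Finset.sum_eq_single (Z ω')]
      · simp only [h, and_self, if_true]
        rw [hF (Z ω') ω' ω h]
        ring
      · intro x _ hx
        simp [hx.symm]
      · simp
    · simp [h]
  simp_rw [h1]
  rw [Finset.sum_comm]
  refine Finset.sum_congr rfl fun ω' _ => ?_
  have h2 : ∀ K : ℝ, (∑ ω, if M ω' = M ω then p ω * K else 0)
      = (∑ ω'', if M ω'' = M ω' then p ω'' else 0) * K := by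
    intro K
    rw [Finset.sum_mul]
    refine Finset.sum_congr rfl fun ω _ => ?_
    by_cases h : M ω = M ω'
    · simp [h]
    · simp [h, Ne.symm h]
  rw [h2]
  by_cases hD : (∑ ω'', if M ω'' = M ω' then p ω'' else 0) = 0
  · have h0 : p ω' = 0 := by
      have := (Finset.sum_eq_zero_iff_of_nonneg (fun ω'' _ => by
        split_ifs
        · exact hp ω''
        · exact le_rfl)).1 hD ω' (Finset.mem_univ _)
      simpa using this
    simp [h0]
  · field_simp

theorem mass_nonneg_aux (P : PrimPMF X W V1 V2) (T : ℕ) (ω : ΩT X W V1 V2 T) :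
    0 ≤ mass P T ω := by
  unfold mass
  have a := P.pX0_nonneg ω.1
  have b := Finset.prod_nonneg (s := Finset.univ)
    (fun (t : Fin (T + 1)) _ => P.pW_nonneg t (ω.2.1 t))
  have c := Finset.prod_nonneg (s := Finset.univ)
    (fun (t : Fin (T + 1)) _ => P.pV1_nonneg t (ω.2.2.1 t))
  have d := Finset.prod_nonneg (s := Finset.univ)
    (fun (t : Fin (T + 1)) _ => P.pV2_nonneg t (ω.2.2.2 t))
  exact mul_nonneg (mul_nonneg (mul_nonneg a b) c) d

/-- Lemma 10 of the paper. With the time-`T` value function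
`J¹_T(π¹, u²) := min_{u¹} c̃¹_T(π¹, u¹, u²)`, `c̃¹_T(π¹,u¹,u²) = Σ_x c_T(x,u¹,u²)·π¹(x)`:
(1) for every admissible team strategy of the structural form
`U¹_t = φ1 t (Π¹_t, Π²_t)` (`t < T`), `U¹_T = φ1T (Π¹_T, Π²_T, U²_T)` (extended
memory at `T`), `U²_t = φ2 t (Π²_t)`, the expected terminal cost satisfies
`𝒥_T(g) ≥ E[J¹_T(Π¹_T, U²_T)]`; and (2) an argmin selector `g1star` for agent 1
achieves equality when substituted at time `T`. -/
theorem terminal_DP_agent1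
    [∀ t, Fintype (X t)] [∀ t, Fintype (U1 t)] [∀ t, Fintype (U2 t)]
    [∀ t, Fintype (Y1 t)] [∀ t, Fintype (Y2 t)] [∀ t, Nonempty (U1 t)]
    (T : ℕ) (S : Sys X U1 U2 W V1 V2 Y1 Y2) (P : PrimPMF X W V1 V2)
    (J1T : (X T → ℝ) → U2 T → ℝ)
    (hJ1T : ∀ (π : X T → ℝ) (u2 : U2 T),
      J1T π u2 = Finset.univ.inf' Finset.univ_nonempty
        (fun u1 : U1 T => ∑ x, S.c T x u1 u2 * π x)) :
    ∀ (g : Strat U1 U2 Y1 Y2)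
      (φ1 : ∀ t, (X t → ℝ) → (X t × Lp Y1 U1 t → ℝ) → U1 t)
      (φ1T : (X T → ℝ) → (X T × Lp Y1 U1 T → ℝ) → U2 T → U1 T)
      (φ2 : ∀ t, (X t × Lp Y1 U1 t → ℝ) → U2 t),
      (∀ t, t < T → ∀ ω : ΩT X W V1 V2 T, 0 < mass P T ω →
        u1Traj S g (toPrim T ω) t =
          φ1 t (infoState1 S g P T ω t) (infoState2 S g P T ω t)) →
      (∀ ω : ΩT X W V1 V2 T, 0 < mass P T ω →
        u1Traj S g (toPrim T ω) T =
          φ1T (infoState1 S g P T ω T) (infoState2 S g P T ω T)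
            (u2Traj S g (toPrim T ω) T)) →
      (∀ t, t ≤ T → ∀ ω : ΩT X W V1 V2 T, 0 < mass P T ω →
        u2Traj S g (toPrim T ω) t = φ2 t (infoState2 S g P T ω t)) →
      -- (1) lower bound on the expected terminal-stage cost
      ((∑ ω : ΩT X W V1 V2 T, mass P T ω * stageCost S g (toPrim T ω) T) ≥
        ∑ ω : ΩT X W V1 V2 T, mass P T ω *
          J1T (infoState1 S g P T ω T) (u2Traj S g (toPrim T ω) T)) ∧
      -- (2) equality for the argmin control law of agent 1 at time T
      (∃ g1star : (X T → ℝ) → U2 T → U1 T,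
        (∀ (π : X T → ℝ) (u2 : U2 T),
          (∑ x, S.c T x (g1star π u2) u2 * π x) = J1T π u2) ∧
        (∑ ω : ΩT X W V1 V2 T, mass P T ω *
            S.c T (xTraj S g (toPrim T ω) T)
              (g1star (infoState1 S g P T ω T) (u2Traj S g (toPrim T ω) T))
              (u2Traj S g (toPrim T ω) T)) =
          ∑ ω : ΩT X W V1 V2 T, mass P T ω *
            J1T (infoState1 S g P T ω T) (u2Traj S g (toPrim T ω) T)) := by
  intro g φ1 φ1T φ2 _ _ _
  have hu2 : ∀ ω ω' : ΩT X W V1 V2 T,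
      m1Traj S g (toPrim T ω) T = m1Traj S g (toPrim T ω') T →
      u2Traj S g (toPrim T ω) T = u2Traj S g (toPrim T ω') T := by
    intro ω ω' h
    exact congrArg (fun m => g.g2 T m.2) h
  have hu1 : ∀ ω ω' : ΩT X W V1 V2 T,
      m1Traj S g (toPrim T ω) T = m1Traj S g (toPrim T ω') T →
      u1Traj S g (toPrim T ω) T = u1Traj S g (toPrim T ω') T := by
    intro ω ω' h
    exact congrArg (fun m => g.g1 T m) h
  have hI : ∀ ω ω' : ΩT X W V1 V2 T,
      m1Traj S g (toPrim T ω) T = m1Traj S g (toPrim T ω') T →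
      infoState1 S g P T ω T = infoState1 S g P T ω' T := by
    intro ω ω' h
    unfold infoState1
    rw [h]
  refine ⟨?_, ?_⟩
  · have key := smoothing_aux (mass P T) (mass_nonneg_aux P T)
      (fun ω => xTraj S g (toPrim T ω) T) (fun ω => m1Traj S g (toPrim T ω) T)
      (fun x ω => S.c T x (u1Traj S g (toPrim T ω) T) (u2Traj S g (toPrim T ω) T))
      (fun x ω ω' h => by simp only [hu1 ω ω' h, hu2 ω ω' h])
    refine le_of_le_of_eq ?_ key.symm
    refine Finset.sum_le_sum fun ω _ => mul_le_mul_of_nonneg_left ?_ (mass_nonneg_aux P T ω)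
    rw [hJ1T]
    exact Finset.inf'_le _ (Finset.mem_univ (u1Traj S g (toPrim T ω) T))
  · have hex : ∀ (π : X T → ℝ) (u2 : U2 T), ∃ u1 : U1 T,
        (∑ x, S.c T x u1 u2 * π x) = J1T π u2 := by
      intro π u2
      obtain ⟨u1, _, h⟩ := Finset.exists_mem_eq_inf' (Finset.univ_nonempty (α := U1 T))
        (fun u1 : U1 T => ∑ x, S.c T x u1 u2 * π x)
      exact ⟨u1, by rw [hJ1T, h]⟩
    choose g1star hg using hex
    refine ⟨g1star, hg, ?_⟩
    have key := smoothing_aux (mass P T) (mass_nonneg_aux P T)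
      (fun ω => xTraj S g (toPrim T ω) T) (fun ω => m1Traj S g (toPrim T ω) T)
      (fun x ω => S.c T x
        (g1star (infoState1 S g P T ω T) (u2Traj S g (toPrim T ω) T))
        (u2Traj S g (toPrim T ω) T))
      (fun x ω ω' h => by simp only [hI ω ω' h, hu2 ω ω' h])
    refine Eq.trans key ?_
    refine Finset.sum_congr rfl fun ω _ => ?_
    rw [← hg]
    rfl

end

end NestedTeam
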